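/- Mertens' third theorem: ∏_{p ≤ x} (1 - 1/p) is asymptotic to e^{-γ} / ln x as x → ∞. -/

import Mathlib

open Filter

noncomputable def mB (n : ℕ) : ℝ := if n.Prime then Real.log n / n else 0
noncomputable def mG (n : ℕ) : ℝ := if n.Prime then -Real.log (1 - 1 / (n : ℝ)) else 0
noncomputable def mQ (n : ℕ) : ℝ := if n.Prime then -Real.log (1 - 1 / (n : ℝ)) - 1 / n else 0

lemma m_log_factorial_eq (N : ℕ) : Real.log (N.factorial) =
    ∑ p ∈ (Finset.Icc 1 N).filter Nat.Prime, (padicValNat p N.factorial : ℝ) * Real.log p := by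
  have h := Nat.prod_pow_prime_padicValNat (N.factorial) (Nat.factorial_ne_zero N)
    (N.factorial+1) (by omega)
  have h' : ∏ p ∈ (Finset.Icc 1 N).filter Nat.Prime, p ^ padicValNat p N.factorial = N.factorial := by
    refine Eq.trans ?_ h
    apply Finset.prod_subset
    · intro p
      simp only [Finset.mem_filter, Finset.mem_Icc, Finset.mem_range]
      rintro ⟨⟨_, h1⟩, h2⟩
      have := Nat.self_le_factorial N
      exact ⟨by omega, h2⟩
    · intro p
      simp only [Finset.mem_filter, Finset.mem_Icc, Finset.mem_range]
      rintro ⟨h1, h2⟩ h3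
      have : ¬ p ∣ N.factorial := by
        rw [h2.dvd_factorial]
        intro h4
        exact h3 ⟨⟨h2.one_le, h4⟩, h2⟩
      rw [padicValNat.eq_zero_of_not_dvd this, pow_zero]
  conv_lhs => rw [← h']
  push_cast
  rw [Real.log_prod]
  · apply Finset.sum_congr rfl
    intro p _
    rw [Real.log_pow]
  · intro p hp
    have := (Finset.mem_filter.mp hp).2.pos
    positivity

lemma m_log_factorial_le (N : ℕ) : Real.log (N.factorial) ≤ N * Real.log N := by
  rw [← Real.log_pow]
  apply Real.log_le_log (by positivity)
  exact_mod_cast Nat.factorial_le_pow N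

lemma m_le_log_factorial (N : ℕ) (hN : 1 ≤ N) : N * Real.log N - N ≤ Real.log (N.factorial) := by
  have h := Real.pow_div_factorial_le_exp (N:ℝ) (by positivity) N
  have h1 : (0:ℝ) < N := by exact_mod_cast hN
  have h2 := Real.log_le_log (by positivity) h
  rw [Real.log_exp, Real.log_div (by positivity) (by positivity), Real.log_pow] at h2
  linarith

lemma m_summable_aux : Summable (fun n : ℕ => if n.Prime then Real.log n / (n * (n - 1)) else 0) := by
  have h : Summable (fun n : ℕ => 4 * (1 / (n:ℝ) ^ (3/2:ℝ))) :=
    (Real.summable_one_div_nat_rpow.mpr (by norm_num)).mul_left 4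
  refine Summable.of_nonneg_of_le ?_ ?_ h
  · intro n
    split_ifs with hp
    · have : (2:ℝ) ≤ n := by exact_mod_cast hp.two_le
      have := Real.log_nonneg (by linarith : (1:ℝ) ≤ n)
      apply div_nonneg this
      apply mul_nonneg <;> linarith
    · exact le_rfl
  · intro n
    split_ifs with hp
    · have h2 : (2:ℝ) ≤ n := by exact_mod_cast hp.two_le
      have h3 := Real.log_le_rpow_div (by linarith : (0:ℝ) ≤ n) (by norm_num : (0:ℝ) < 1/2)
      have h4 : (n:ℝ) ^ (1/2:ℝ) * (n:ℝ) ^ (3/2:ℝ) = n ^ 2 := by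
        rw [← Real.rpow_add (by linarith)]; norm_num
      have hpos : 0 < (n:ℝ) ^ (3/2:ℝ) := by positivity
      rw [mul_one_div, div_le_div_iff₀ (by nlinarith) hpos]
      calc _ ≤ (n:ℝ) ^ (1/2:ℝ) / (1/2) * (n:ℝ) ^ (3/2:ℝ) := by gcongr
        _ = 2 * n^2 := by rw [← h4]; ring
        _ ≤ _ := by nlinarith
    · positivity

lemma m_first : ∃ K : ℝ, ∀ N : ℕ, 1 ≤ N → |∑ n ∈ Finset.Icc 1 N, mB n - Real.log N| ≤ K := by
  set S := ∑' n : ℕ, (if n.Prime then Real.log n / (n * (n - 1)) else (0:ℝ)) with hS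
  have hS0 : 0 ≤ S := by
    apply tsum_nonneg
    intro n
    split_ifs with hp
    · have : (2:ℝ) ≤ n := by exact_mod_cast hp.two_le
      have := Real.log_nonneg (by linarith : (1:ℝ) ≤ n)
      apply div_nonneg this
      apply mul_nonneg <;> linarith
    · exact le_rfl
  refine ⟨max (1 + S) (Real.log 4), fun N hN => ?_⟩
  have hNpos : (0:ℝ) < N := by exact_mod_cast hN
  have hE := m_log_factorial_eq N
  have hB : ∑ n ∈ Finset.Icc 1 N, mB n = ∑ p ∈ (Finset.Icc 1 N).filter Nat.Prime, Real.log p / p := by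
    rw [Finset.sum_filter]; rfl
  have hSle : ∑ p ∈ (Finset.Icc 1 N).filter Nat.Prime, Real.log p / (p * (p-1)) ≤ S := by
    rw [Finset.sum_filter]
    apply m_summable_aux.sum_le_tsum
    intro n _
    split_ifs with hp
    · have : (2:ℝ) ≤ n := by exact_mod_cast hp.two_le
      have := Real.log_nonneg (by linarith : (1:ℝ) ≤ n)
      apply div_nonneg this
      apply mul_nonneg <;> linarith
    · exact le_rfl
  have hup : Real.log N.factorial ≤ N * (∑ n ∈ Finset.Icc 1 N, mB n) + N * S := by
    rw [hE, hB]
    refine le_trans ?_ (add_le_add_right (mul_le_mul_of_nonneg_left hSle hNpos.le) _)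
    rw [Finset.mul_sum, Finset.mul_sum, ← Finset.sum_add_distrib]
    apply Finset.sum_le_sum
    intro p hp
    have hp' : p.Prime := (Finset.mem_filter.mp hp).2
    have := Fact.mk hp'
    have h2 : (2:ℝ) ≤ p := by exact_mod_cast hp'.two_le
    have hl := Real.log_nonneg (by linarith : (1:ℝ) ≤ p)
    have hv : (p - 1) * padicValNat p N.factorial ≤ N := by
      rw [sub_one_mul_padicValNat_factorial]; exact Nat.sub_le _ _
    have hv' : ((p:ℝ) - 1) * padicValNat p N.factorial ≤ N := by
      have : (((p - 1 : ℕ) : ℝ)) * padicValNat p N.factorial ≤ N := by exact_mod_cast hv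
      rwa [Nat.cast_sub hp'.one_le, Nat.cast_one] at this
    have : (padicValNat p N.factorial : ℝ) ≤ N / (p - 1) := by
      rw [le_div_iff₀ (by linarith)]; linarith
    calc _ ≤ (N / (p - 1) : ℝ) * Real.log p := by gcongr
      _ = _ := by
        have : (p:ℝ) - 1 ≠ 0 := by linarith
        field_simp
        ring
  have hlow : N * (∑ n ∈ Finset.Icc 1 N, mB n) - Real.log 4 * N ≤ Real.log N.factorial := by
    have hth := Chebyshev.theta_le_log4_mul_x hNpos.le
    rw [Chebyshev.theta_eq_sum_Icc, Nat.floor_natCast] at hth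
    have hth' : ∑ p ∈ (Finset.Icc 1 N).filter Nat.Prime, Real.log p ≤ Real.log 4 * N := by
      refine le_trans (le_of_eq ?_) hth
      apply Finset.sum_congr _ (fun _ _ => rfl)
      ext p; simp only [Finset.mem_filter, Finset.mem_Icc]
      constructor
      · rintro ⟨⟨_, h⟩, h'⟩; exact ⟨⟨by omega, h⟩, h'⟩
      · rintro ⟨⟨_, h⟩, h'⟩; exact ⟨⟨h'.one_le, h⟩, h'⟩
    refine le_trans (sub_le_sub_left hth' _) ?_
    rw [hE, hB, Finset.mul_sum, ← Finset.sum_sub_distrib]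
    apply Finset.sum_le_sum
    intro p hp
    have hp' : p.Prime := (Finset.mem_filter.mp hp).2
    have := Fact.mk hp'
    have h2 : (2:ℝ) ≤ p := by exact_mod_cast hp'.two_le
    have hl := Real.log_nonneg (by linarith : (1:ℝ) ≤ p)
    have hv : N / p ≤ padicValNat p N.factorial := by
      rw [padicValNat_factorial (b := Nat.log p N + 2) (by omega)]
      have := Finset.single_le_sum (f := fun i => N / p ^ i) (s := Finset.Ico 1 (Nat.log p N + 2))
        (fun i _ => Nat.zero_le _) (a := 1) (by simp)
      simpa using this
    have hv' : (N:ℝ) / p - 1 ≤ padicValNat p N.factorial := by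
      have h5 : (N:ℝ) / p < (N / p : ℕ) + 1 := by
        rw [div_lt_iff₀ (by linarith)]
        have := Nat.lt_div_mul_add (a := N) (hp'.pos)
        have h6 : (N:ℝ) < (N / p : ℕ) * p + p := by exact_mod_cast this
        linarith
      have : ((N / p : ℕ) : ℝ) ≤ padicValNat p N.factorial := by exact_mod_cast hv
      linarith
    calc _ = ((N:ℝ) / p - 1) * Real.log p := by ring
      _ ≤ _ := by gcongr
  have h1 := m_log_factorial_le N
  have h2 := m_le_log_factorial N hN
  rw [abs_le]
  constructor
  · have : N * (Real.log N - 1 - S) ≤ N * (∑ n ∈ Finset.Icc 1 N, mB n) := by linarith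
    have := le_of_mul_le_mul_left this hNpos
    linarith [le_max_left (1+S) (Real.log 4)]
  · have : N * (∑ n ∈ Finset.Icc 1 N, mB n) ≤ N * (Real.log N + Real.log 4) := by linarith
    have := le_of_mul_le_mul_left this hNpos
    linarith [le_max_right (1+S) (Real.log 4)]

lemma m_q_bound {x : ℝ} (h0 : 0 ≤ x) (h : x ≤ 1/2) : |-Real.log (1 - x) - x| ≤ 2 * x ^ 2 := by
  have := Real.abs_log_sub_add_sum_range_le (x := x) (by rw [abs_of_nonneg h0]; linarith) 1
  simp only [Finset.sum_range_one, abs_of_nonneg h0] at this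
  norm_num at this
  rw [← abs_neg]
  refine le_trans (le_of_eq (by ring_nf)) (this.trans ?_)
  rw [div_le_iff₀ (by linarith)]
  nlinarith [sq_nonneg x]

lemma m_prime_inv {n : ℕ} (hp : n.Prime) : 0 ≤ 1 / (n:ℝ) ∧ 1 / (n:ℝ) ≤ 1/2 := by
  have h2 : (2:ℝ) ≤ n := by exact_mod_cast hp.two_le
  exact ⟨by positivity, one_div_le_one_div_of_le (by norm_num) h2⟩

lemma m_summable_Q : Summable mQ := by
  have h : Summable (fun n : ℕ => 2 * (1 / (n:ℝ) ^ 2)) :=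
    (Real.summable_one_div_nat_pow.mpr (by norm_num)).mul_left 2
  refine Summable.of_norm_bounded h ?_
  intro n
  unfold mQ
  split_ifs with hp
  · have := m_q_bound (m_prime_inv hp).1 (m_prime_inv hp).2
    rw [Real.norm_eq_abs]
    refine this.trans (le_of_eq ?_)
    ring
  · rw [norm_zero]; positivity

lemma m_sum_Icc (f : ℕ → ℝ) (h : f 1 = 0) (n : ℕ) :
    ∑ k ∈ Finset.Icc 1 (n+1), f k = ∑ i ∈ Finset.range n, f (i+2) := by
  induction n with
  | zero => simp [h]
  | succ n ih => rw [Finset.sum_Icc_succ_top (by omega), ih, Finset.sum_range_succ]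

lemma m_z_conv : ∃ l, Tendsto (fun n => ∑ i ∈ Finset.range n,
    (1 / Real.log ((i:ℝ)+2)) * (mB (i+2) - (Real.log ((i:ℝ)+2) - Real.log ((i:ℝ)+1)))) atTop (nhds l) := by
  obtain ⟨K, hK⟩ := m_first
  apply cauchySeq_tendsto_of_complete
  have := Antitone.cauchySeq_series_mul_of_tendsto_zero_of_bounded
    (f := fun i : ℕ => 1 / Real.log ((i:ℝ)+2))
    (z := fun i : ℕ => (mB (i+2) - (Real.log ((i:ℝ)+2) - Real.log ((i:ℝ)+1)))) (b := K) ?_ ?_ ?_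
  · simpa only [smul_eq_mul] using this
  · intro a b hab
    have : (a:ℝ) ≤ b := by exact_mod_cast hab
    apply one_div_le_one_div_of_le
    · apply Real.log_pos; linarith [Nat.cast_nonneg (α := ℝ) a]
    · apply Real.log_le_log <;> linarith [Nat.cast_nonneg (α := ℝ) a]
  · simp only [one_div]
    apply Tendsto.inv_tendsto_atTop
    apply Real.tendsto_log_atTop.comp
    exact tendsto_atTop_add_const_right _ _ tendsto_natCast_atTop_atTop
  · intro n
    have h1 := hK (n+1) (by omega)
    rw [m_sum_Icc mB (by simp [mB, Nat.not_prime_one])] at h1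
    have h2 := Finset.sum_range_sub (fun i : ℕ => Real.log ((i:ℝ)+1)) n
    rw [Finset.sum_sub_distrib, Real.norm_eq_abs]
    have h3 : ∑ i ∈ Finset.range n, (Real.log ((i:ℝ)+2) - Real.log ((i:ℝ)+1)) = Real.log (n+1) := by
      rw [← sub_zero (Real.log (n+1)), ← Real.log_one]
      convert h2 using 3
      · push_cast; ring_nf
      · simp
    rw [h3]
    exact_mod_cast h1

noncomputable def mD (i : ℕ) : ℝ := (Real.log (Real.log ((i:ℝ)+3)) - Real.log (Real.log ((i:ℝ)+2)))
  - (Real.log ((i:ℝ)+3) - Real.log ((i:ℝ)+2)) / Real.log ((i:ℝ)+3)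

lemma m_summable_D : Summable mD := by
  have hb : ∀ i : ℕ, 0 ≤ mD i ∧ mD i ≤
      Real.log 2 * (1 / Real.log ((i:ℝ)+2) - 1 / Real.log ((i:ℝ)+3)) := by
    intro i
    have hi : (0:ℝ) ≤ i := Nat.cast_nonneg i
    have ha : 0 < Real.log ((i:ℝ)+2) := Real.log_pos (by linarith)
    have hc : 0 < Real.log ((i:ℝ)+3) := Real.log_pos (by linarith)
    have hle : Real.log ((i:ℝ)+2) ≤ Real.log ((i:ℝ)+3) := Real.log_le_log (by linarith) (by linarith)
    have hd : Real.log ((i:ℝ)+3) - Real.log ((i:ℝ)+2) ≤ Real.log 2 := by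
      rw [sub_le_iff_le_add, ← Real.log_mul (by norm_num) (by linarith)]
      exact Real.log_le_log (by linarith) (by linarith)
    unfold mD
    set a := Real.log ((i:ℝ)+2)
    set c := Real.log ((i:ℝ)+3)
    rw [← Real.log_div hc.ne' ha.ne']
    have h1 := Real.one_sub_inv_le_log_of_pos (div_pos hc ha)
    have h2 := Real.log_le_sub_one_of_pos (div_pos hc ha)
    have e1 : (c - a) / c = 1 - (c/a)⁻¹ := by field_simp
    constructor
    · linarith
    · calc _ ≤ c / a - 1 - (c-a)/c := by linarith
        _ = (c - a) * (1 / a - 1 / c) := by field_simp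
        _ ≤ _ := by
          apply mul_le_mul_of_nonneg_right hd
          rw [sub_nonneg]; exact one_div_le_one_div_of_le ha hle
  apply summable_of_sum_range_le (c := Real.log 2 * (1 / Real.log 2)) (fun i => (hb i).1)
  intro n
  refine (Finset.sum_le_sum (fun i _ => (hb i).2)).trans ?_
  rw [← Finset.mul_sum]
  apply mul_le_mul_of_nonneg_left _ (Real.log_nonneg (by norm_num))
  have h2 := Finset.sum_range_sub' (fun i : ℕ => 1 / Real.log ((i:ℝ)+2)) n
  have h3 : ∑ i ∈ Finset.range n, (1 / Real.log ((i:ℝ)+2) - 1 / Real.log ((i:ℝ)+3)) =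
      1 / Real.log 2 - 1 / Real.log (n+2) := by
    convert h2 using 3
    · push_cast; ring_nf
    · simp
  rw [h3]
  have : 0 ≤ 1 / Real.log ((n:ℝ)+2) := by
    apply div_nonneg zero_le_one; apply Real.log_nonneg; linarith [Nat.cast_nonneg (α := ℝ) n]
  linarith

lemma m_second : ∃ C, Tendsto (fun N : ℕ => ∑ n ∈ Finset.Icc 1 N, mG n - Real.log (Real.log N))
    atTop (nhds C) := by
  obtain ⟨l, hl⟩ := m_z_conv
  have hQ := ((summable_nat_add_iff 2).mpr m_summable_Q).hasSum.tendsto_sum_nat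
  have hD := m_summable_D.hasSum.tendsto_sum_nat
  refine ⟨((∑' i, mQ (i+2)) + l + (1 - Real.log (Real.log 2)) - ∑' i, mD i),
    (tendsto_add_atTop_iff_nat 2).mp ?_⟩
  have := ((((tendsto_add_atTop_iff_nat 1).mpr hQ).add ((tendsto_add_atTop_iff_nat 1).mpr hl)).add_const
    (1 - Real.log (Real.log 2))).sub hD
  refine this.congr ?_
  intro n
  rw [m_sum_Icc mG (by simp [mG, Nat.not_prime_one]) (n+1)]
  have e1 : ∀ i : ℕ, mG (i+2) = mQ (i+2) + (1 / Real.log ((i:ℝ)+2)) * mB (i+2) := by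
    intro i
    have ha : 0 < Real.log ((i:ℝ)+2) := Real.log_pos (by linarith [Nat.cast_nonneg (α := ℝ) i])
    unfold mG mQ mB
    split_ifs
    · push_cast
      field_simp
      ring
    · simp
  have e2 : ∑ i ∈ Finset.range (n+1), (1 / Real.log ((i:ℝ)+2)) * (Real.log ((i:ℝ)+2) - Real.log ((i:ℝ)+1))
     = 1 + (Real.log (Real.log ((n:ℝ)+2)) - Real.log (Real.log 2)) - ∑ i ∈ Finset.range n, mD i := by
    have h2 := Finset.sum_range_sub (fun i : ℕ => Real.log (Real.log ((i:ℝ)+2))) n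
    have h3 : ∑ i ∈ Finset.range n, (Real.log (Real.log ((i:ℝ)+3)) - Real.log (Real.log ((i:ℝ)+2))) =
      Real.log (Real.log ((n:ℝ)+2)) - Real.log (Real.log 2) := by
      convert h2 using 3
      · push_cast; ring_nf
      · simp
    rw [← h3, Finset.sum_range_succ', add_comm, add_sub_assoc, ← Finset.sum_sub_distrib]
    congr 1
    · have : Real.log 2 ≠ 0 := (Real.log_pos (by norm_num)).ne'
      simp [this]
    · apply Finset.sum_congr rfl
      intro i _
      unfold mD
      push_cast
      ring_nf
  simp_rw [e1, Finset.sum_add_distrib, mul_sub (1 / Real.log _) (mB _), Finset.sum_sub_distrib, e2]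
  push_cast
  ring

lemma m_floor_log : Tendsto (fun x : ℝ => Real.log ⌊x⌋₊ - Real.log x) atTop (nhds 0) := by
  have h := tendsto_nat_floor_div_atTop (R := ℝ)
  have h2 := (Real.continuousAt_log one_ne_zero).tendsto.comp h
  rw [Real.log_one] at h2
  refine h2.congr' ?_
  filter_upwards [eventually_ge_atTop 1] with x hx
  have : 0 < ⌊x⌋₊ := Nat.floor_pos.mpr hx
  rw [Function.comp_apply, Real.log_div (by positivity) (by positivity)]

lemma m_floor_loglog : Tendsto (fun x : ℝ => Real.log (Real.log ⌊x⌋₊) - Real.log (Real.log x))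
    atTop (nhds 0) := by
  have h1 := (m_floor_log.div_atTop Real.tendsto_log_atTop).add_const 1
  rw [zero_add] at h1
  have h2 := (Real.continuousAt_log one_ne_zero).tendsto.comp h1
  rw [Real.log_one] at h2
  refine h2.congr' ?_
  filter_upwards [eventually_ge_atTop 2] with x hx
  have h3 : 2 ≤ ⌊x⌋₊ := Nat.le_floor hx
  have h4 : (2:ℝ) ≤ ⌊x⌋₊ := by exact_mod_cast h3
  have h5 : 0 < Real.log ⌊x⌋₊ := Real.log_pos (by linarith)
  have h6 : 0 < Real.log x := Real.log_pos (by linarith)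
  rw [Function.comp_apply, ← Real.log_div h5.ne' h6.ne']
  congr 1
  field_simp
  ring

noncomputable def mGt (t : ℝ) : ℝ := ∑ n ∈ Finset.Icc 1 ⌊Real.exp t⌋₊, mG n
noncomputable def mHt (t : ℝ) : ℝ := ∑ n ∈ Finset.Icc 1 ⌊t⌋₊, (1:ℝ) / n

lemma m_G_nonneg (n : ℕ) : 0 ≤ mG n := by
  unfold mG
  split_ifs with hp
  · obtain ⟨h1, h2⟩ := m_prime_inv hp
    rw [neg_nonneg]
    exact Real.log_nonpos (by linarith) (by linarith)
  · exact le_rfl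

lemma m_Gt_mono : Monotone mGt := by
  intro a b hab
  apply Finset.sum_le_sum_of_subset_of_nonneg
  · exact Finset.Icc_subset_Icc_right (Nat.floor_mono (Real.exp_le_exp.mpr hab))
  · intro i _ _; exact m_G_nonneg i

lemma m_Ht_mono : Monotone mHt := by
  intro a b hab
  apply Finset.sum_le_sum_of_subset_of_nonneg
  · exact Finset.Icc_subset_Icc_right (Nat.floor_mono hab)
  · intro i _ _; positivity

lemma m_Gt_nonneg (t : ℝ) : 0 ≤ mGt t := Finset.sum_nonneg (fun i _ => m_G_nonneg i)
lemma m_Ht_nonneg (t : ℝ) : 0 ≤ mHt t := Finset.sum_nonneg (fun i _ => by positivity)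

lemma m_Ht_le (t : ℝ) (ht : 0 ≤ t) : mHt t ≤ t := by
  refine le_trans ?_ (Nat.floor_le ht)
  have : mHt t ≤ ∑ n ∈ Finset.Icc 1 ⌊t⌋₊, (1:ℝ) := by
    apply Finset.sum_le_sum
    intro n hn
    have : 1 ≤ n := (Finset.mem_Icc.mp hn).1
    have : (1:ℝ) ≤ n := by exact_mod_cast this
    rw [div_le_one (by linarith)]; exact this
  simpa using this

lemma m_laplace (a lam : ℕ → ℝ) (A : ℝ → ℝ) (ha : ∀ n, 0 ≤ a n) (hl : ∀ n, 0 ≤ lam n)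
    (hA : ∀ t, 0 ≤ t → ∑' n, (if lam n ≤ t then a n else 0) = A t) {s : ℝ} (hs : 0 < s)
    (hsum : Summable fun n => a n * Real.exp (-(s * lam n))) :
    ∫ u in Set.Ioi (0:ℝ), A (u / s) * Real.exp (-u) = ∑' n, a n * Real.exp (-(s * lam n)) := by
  set F : ℕ → ℝ → ℝ := fun n u => (if lam n ≤ u / s then a n else 0) * Real.exp (-u) with hF
  have hFe : ∀ n, F n = Set.indicator (Set.Ici (s * lam n)) (fun u => a n * Real.exp (-u)) := by
    intro n; ext u
    simp only [hF, Set.indicator_apply, Set.mem_Ici, le_div_iff₀ hs, mul_comm s]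
    split_ifs <;> simp
  have hint0 : MeasureTheory.IntegrableOn (fun u : ℝ => Real.exp (-u)) (Set.Ici 0) := by
    rw [integrableOn_Ici_iff_integrableOn_Ioi]
    exact integrableOn_exp_neg_Ioi 0
  have hint : ∀ n, MeasureTheory.Integrable (F n) (MeasureTheory.volume.restrict (Set.Ici 0)) := by
    intro n
    rw [hFe]
    exact (hint0.const_mul (a n)).indicator measurableSet_Ici
  have hval : ∀ n, ∫ u in Set.Ici (0:ℝ), F n u = a n * Real.exp (-(s * lam n)) := by
    intro n
    rw [hFe, MeasureTheory.setIntegral_indicator measurableSet_Ici]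
    have : Set.Ici (0:ℝ) ∩ Set.Ici (s * lam n) = Set.Ici (s * lam n) := by
      rw [Set.Ici_inter_Ici, sup_eq_right.mpr (mul_nonneg hs.le (hl n))]
    rw [this, MeasureTheory.integral_Ici_eq_integral_Ioi, MeasureTheory.integral_const_mul,
      integral_exp_neg_Ioi]
  have hnn : ∀ n u, 0 ≤ F n u := by
    intro n u
    apply mul_nonneg _ (Real.exp_pos _).le
    split_ifs
    · exact ha n
    · exact le_rfl
  have key := MeasureTheory.hasSum_integral_of_summable_integral_norm hint (by
    simp_rw [Real.norm_of_nonneg (hnn _ _), hval]; exact hsum)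
  simp_rw [hval] at key
  rw [key.tsum_eq, ← MeasureTheory.integral_Ici_eq_integral_Ioi]
  apply MeasureTheory.setIntegral_congr_fun measurableSet_Ici
  intro u hu
  simp only [hF]
  rw [tsum_mul_right, hA _ (div_nonneg hu hs.le)]

lemma m_Gt_tsum (t : ℝ) (ht : 0 ≤ t) :
    ∑' n : ℕ, (if Real.log n ≤ t then mG n else 0) = mGt t := by
  rw [tsum_eq_sum (s := Finset.Icc 1 ⌊Real.exp t⌋₊)]
  · apply Finset.sum_congr rfl
    intro n hn
    obtain ⟨h1, h2⟩ := Finset.mem_Icc.mp hn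
    rw [if_pos]
    rw [Real.log_le_iff_le_exp (by positivity)]
    exact (Nat.le_floor_iff (by positivity)).mp h2
  · intro n hn
    split_ifs with h
    · by_cases hp : n.Prime
      · exfalso
        apply hn
        have := hp.pos
        rw [Real.log_le_iff_le_exp (by positivity)] at h
        exact Finset.mem_Icc.mpr ⟨hp.one_le, Nat.le_floor h⟩
      · simp [mG, hp]
    · rfl

lemma m_Ht_tsum (t : ℝ) (ht : 0 ≤ t) :
    ∑' n : ℕ, (if (n:ℝ) ≤ t then (1:ℝ)/n else 0) = mHt t := by
  rw [tsum_eq_sum (s := Finset.Icc 1 ⌊t⌋₊)]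
  · apply Finset.sum_congr rfl
    intro n hn
    obtain ⟨h1, h2⟩ := Finset.mem_Icc.mp hn
    rw [if_pos]
    exact (Nat.le_floor_iff ht).mp h2
  · intro n hn
    split_ifs with h
    · rcases Nat.eq_zero_or_pos n with h0 | h0
      · simp [h0]
      · exact absurd (Finset.mem_Icc.mpr ⟨h0, Nat.le_floor h⟩) hn
    · rfl

lemma m_abelian (L : ℝ) (h : Tendsto (fun t => mGt t - mHt t) atTop (nhds L)) :
    (∀ s, 0 < s → ∫ u in Set.Ioi (0:ℝ), (mGt (u/s) - mHt (u/s)) * Real.exp (-u) =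
      (∫ u in Set.Ioi (0:ℝ), mGt (u/s) * Real.exp (-u)) -
      ∫ u in Set.Ioi (0:ℝ), mHt (u/s) * Real.exp (-u)) ∧
    Tendsto (fun s => ∫ u in Set.Ioi (0:ℝ), (mGt (u/s) - mHt (u/s)) * Real.exp (-u))
      (nhdsWithin 0 (Set.Ioi 0)) (nhds L) := by
  obtain ⟨M, hM⟩ : ∃ M, ∀ t, |mGt t - mHt t| ≤ M := by
    have h1 := h.abs.eventually (gt_mem_nhds (show |L| < |L| + 1 by linarith))
    obtain ⟨T, hT⟩ := eventually_atTop.mp h1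
    refine ⟨max (|L|+1) (mGt T + mHt T), fun t => ?_⟩
    rcases le_total T t with h2 | h2
    · exact (hT t h2).le.trans (le_max_left _ _)
    · refine le_trans ?_ (le_max_right _ _)
      have := m_Gt_mono h2
      have := m_Ht_mono h2
      have := m_Gt_nonneg t
      have := m_Ht_nonneg t
      rw [abs_le]; constructor <;> linarith
  have hmG : Measurable mGt := m_Gt_mono.measurable
  have hmH : Measurable mHt := m_Ht_mono.measurable
  have hi0 : MeasureTheory.IntegrableOn (fun u : ℝ => Real.exp (-u)) (Set.Ioi 0) :=
    integrableOn_exp_neg_Ioi 0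
  have hi1 : MeasureTheory.IntegrableOn (fun u : ℝ => u * Real.exp (-u)) (Set.Ioi 0) := by
    have := Real.GammaIntegral_convergent (s := 2) (by norm_num)
    refine this.congr_fun ?_ measurableSet_Ioi
    intro u hu
    norm_num
    ring
  have hD : ∀ s : ℝ, MeasureTheory.IntegrableOn
      (fun u => (mGt (u/s) - mHt (u/s)) * Real.exp (-u)) (Set.Ioi 0) := by
    intro s
    refine (hi0.const_mul M).mono' (by fun_prop) ?_
    refine Eventually.of_forall fun u => ?_
    rw [norm_mul, Real.norm_eq_abs, Real.norm_of_nonneg (Real.exp_pos _).le]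
    exact mul_le_mul_of_nonneg_right (hM _) (Real.exp_pos _).le
  constructor
  · intro s hs
    have hH : MeasureTheory.IntegrableOn (fun u => mHt (u/s) * Real.exp (-u)) (Set.Ioi 0) := by
      refine (hi1.const_mul (1/s)).mono' (by fun_prop) ?_
      filter_upwards [MeasureTheory.ae_restrict_mem measurableSet_Ioi] with u hu
      have hu : 0 < u := hu
      rw [Real.norm_of_nonneg (mul_nonneg (m_Ht_nonneg _) (Real.exp_pos _).le)]
      calc _ ≤ u / s * Real.exp (-u) := by
            apply mul_le_mul_of_nonneg_right (m_Ht_le _ (by positivity)) (Real.exp_pos _).le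
        _ = _ := by ring
    have hG : MeasureTheory.IntegrableOn (fun u => mGt (u/s) * Real.exp (-u)) (Set.Ioi 0) := by
      refine ((hD s).add hH).congr_fun ?_ measurableSet_Ioi
      intro u _
      simp only [Pi.add_apply]
      ring
    rw [← MeasureTheory.integral_sub hG hH]
    congr 1; ext u; ring
  · have hL : L = ∫ u in Set.Ioi (0:ℝ), L * Real.exp (-u) := by
      rw [MeasureTheory.integral_const_mul, integral_exp_neg_Ioi]; simp
    conv => rhs; rw [hL]
    apply MeasureTheory.tendsto_integral_filter_of_dominated_convergence
      (fun u => M * Real.exp (-u))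
    · exact Eventually.of_forall fun s => (hD s).aestronglyMeasurable
    · refine Eventually.of_forall fun s => Eventually.of_forall fun u => ?_
      rw [norm_mul, Real.norm_eq_abs, Real.norm_of_nonneg (Real.exp_pos _).le]
      exact mul_le_mul_of_nonneg_right (hM _) (Real.exp_pos _).le
    · exact hi0.const_mul M
    · filter_upwards [MeasureTheory.ae_restrict_mem measurableSet_Ioi] with u hu
      apply Tendsto.mul_const
      have : Tendsto (fun s : ℝ => u / s) (nhdsWithin 0 (Set.Ioi 0)) atTop := by
        simp only [div_eq_mul_inv]
        exact tendsto_inv_nhdsGT_zero.const_mul_atTop hu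
      exact h.comp this

noncomputable def mHom (s : ℝ) (hs : 0 < s) : ℕ →*₀ ℝ where
  toFun n := (n:ℝ) ^ (-(1+s))
  map_zero' := by simp only [Nat.cast_zero]; exact Real.zero_rpow (by linarith)
  map_one' := by simp
  map_mul' m n := by
    push_cast
    exact Real.mul_rpow (by positivity) (by positivity)

noncomputable def mE (s : ℝ) (n : ℕ) : ℝ := if n.Prime then -Real.log (1 - (n:ℝ) ^ (-(1+s))) else 0

lemma m_rpow_le {s : ℝ} (hs : 0 < s) {n : ℕ} (hp : n.Prime) :
    0 ≤ (n:ℝ) ^ (-(1+s)) ∧ (n:ℝ) ^ (-(1+s)) ≤ 1 / n := by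
  have h2 : (2:ℝ) ≤ n := by exact_mod_cast hp.two_le
  refine ⟨by positivity, ?_⟩
  rw [one_div, ← Real.rpow_neg_one]
  exact Real.rpow_le_rpow_of_exponent_le (by linarith) (by linarith)

lemma m_summable_rpow {s : ℝ} (hs : 0 < s) : Summable (fun n : ℕ => (n:ℝ) ^ (-(1+s))) :=
  Real.summable_nat_rpow.mpr (by linarith)

lemma m_summable_E {s : ℝ} (hs : 0 < s) : Summable (mE s) := by
  refine Summable.of_norm_bounded ((m_summable_rpow hs).mul_left 2) ?_
  intro n
  unfold mE
  split_ifs with hp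
  · obtain ⟨h1, h2⟩ := m_rpow_le hs hp
    have h3 := (m_prime_inv hp).2
    have h4 := abs_le.mp (m_q_bound h1 (h2.trans h3))
    rw [Real.norm_eq_abs, abs_le]
    constructor <;> nlinarith
  · rw [norm_zero]; positivity

lemma m_euler {s : ℝ} (hs : 0 < s) :
    ∑' n, mE s n = Real.log (∑' n : ℕ, 1 / (n:ℝ) ^ (1+s)) := by
  have hsum : Summable (fun n => ‖mHom s hs n‖) := (m_summable_rpow hs).norm
  have h := EulerProduct.eulerProduct_completely_multiplicative hsum
  have he : ∑' n, mHom s hs n = ∑' n : ℕ, 1 / (n:ℝ) ^ (1+s) := by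
    apply tsum_congr
    intro n
    change (n:ℝ) ^ (-(1+s)) = _
    rw [Real.rpow_neg (by positivity), one_div]
  rw [he] at h
  have hpos : 0 < ∑' n : ℕ, 1 / (n:ℝ) ^ (1+s) := by
    have hs' : Summable (fun n : ℕ => 1 / (n:ℝ) ^ (1+s)) :=
      Real.summable_one_div_nat_rpow.mpr (by linarith)
    exact hs'.tsum_pos (fun n => by positivity) 1 (by simp)
  have h2 := (Real.continuousAt_log hpos.ne').tendsto.comp h
  refine tendsto_nhds_unique (m_summable_E hs).hasSum.tendsto_sum_nat (h2.congr ?_)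
  intro N
  rw [Function.comp_apply, Real.log_prod, Nat.primesBelow, Finset.sum_filter]
  · apply Finset.sum_congr rfl
    intro n _
    unfold mE
    split_ifs
    · rw [Real.log_inv]; rfl
    · rfl
  · intro p hp
    have hp' := Nat.prime_of_mem_primesBelow hp
    obtain ⟨h1, h2⟩ := m_rpow_le hs hp'
    have h3 := (m_prime_inv hp').2
    have : mHom s hs p = (p:ℝ) ^ (-(1+s)) := rfl
    rw [this]
    exact inv_ne_zero (by linarith)

lemma m_exp_log {s : ℝ} {n : ℕ} (hp : n.Prime) : Real.exp (-(s * Real.log n)) = (n:ℝ) ^ (-s) := by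
  have := hp.pos
  rw [Real.rpow_def_of_pos (by positivity)]; ring_nf

lemma m_diff_bound {s : ℝ} (hs : 0 < s) (n : ℕ) :
    ‖mE s n - mG n * Real.exp (-(s * Real.log n))‖ ≤ 4 * (1 / (n:ℝ) ^ 2) := by
  unfold mE mG
  split_ifs with hp
  · obtain ⟨h1, h2⟩ := m_rpow_le hs hp
    obtain ⟨h3, h4⟩ := m_prime_inv hp
    have h5 := m_q_bound h1 (h2.trans h4)
    have h6 := m_q_bound h3 h4
    have hn : (2:ℝ) ≤ n := by exact_mod_cast hp.two_le
    rw [m_exp_log hp]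
    have h7 : (n:ℝ) ^ (-(1+s)) = 1 / n * (n:ℝ) ^ (-s) := by
      rw [neg_add, Real.rpow_add (by linarith), Real.rpow_neg_one, one_div]
    have h8 : (n:ℝ) ^ (-s) ≤ 1 := Real.rpow_le_one_of_one_le_of_nonpos (by linarith) (by linarith)
    have h9 : 0 ≤ (n:ℝ) ^ (-s) := by positivity
    have e : -Real.log (1 - (n:ℝ) ^ (-(1+s))) - -Real.log (1 - 1 / (n:ℝ)) * (n:ℝ) ^ (-s) =
      (-Real.log (1 - (n:ℝ) ^ (-(1+s))) - (n:ℝ) ^ (-(1+s))) -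
      (-Real.log (1 - 1 / (n:ℝ)) - 1 / n) * (n:ℝ) ^ (-s) := by
      rw [sub_mul, ← h7]; ring
    rw [Real.norm_eq_abs, e]
    refine (abs_sub _ _).trans ?_
    rw [abs_mul, abs_of_nonneg h9]
    have h10 : |-Real.log (1 - 1 / (n:ℝ)) - 1 / n| * (n:ℝ) ^ (-s) ≤ 2 * (1 / (n:ℝ))^2 * 1 := by
      gcongr
    have h11 : ((n:ℝ) ^ (-(1+s)))^2 ≤ (1 / (n:ℝ))^2 := by gcongr
    have h12 : (1 / (n:ℝ))^2 = 1 / (n:ℝ)^2 := by ring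
    linarith
  · simp only [zero_mul, sub_zero, norm_zero]; positivity

lemma m_four : Summable (fun n : ℕ => 4 * (1 / (n:ℝ) ^ 2)) :=
  (Real.summable_one_div_nat_pow.mpr (by norm_num)).mul_left 4

lemma m_summable_Gs {s : ℝ} (hs : 0 < s) :
    Summable (fun n : ℕ => mG n * Real.exp (-(s * Real.log n))) := by
  have := (m_summable_E hs).sub (Summable.of_norm_bounded m_four (m_diff_bound hs))
  refine this.congr ?_
  intro n; ring

lemma m_diff_tendsto : Tendsto (fun s : ℝ => ∑' n : ℕ, (mE s n - mG n * Real.exp (-(s * Real.log n))))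
    (nhdsWithin 0 (Set.Ioi 0)) (nhds 0) := by
  have h0 : (0:ℝ) = ∑' n : ℕ, (0:ℝ) := by simp
  conv => rhs; rw [h0]
  refine tendsto_tsum_of_dominated_convergence m_four ?_ ?_
  · intro n
    unfold mE mG
    split_ifs with hp
    · have hn : (2:ℝ) ≤ n := by exact_mod_cast hp.two_le
      have hc : ContinuousAt (fun s : ℝ => -Real.log (1 - (n:ℝ) ^ (-(1+s))) -
          -Real.log (1 - 1 / (n:ℝ)) * Real.exp (-(s * Real.log n))) 0 := by
        have h1 : ContinuousAt (fun s : ℝ => (n:ℝ) ^ (-(1+s))) 0 :=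
          ContinuousAt.rpow (by fun_prop) (by fun_prop) (Or.inl (by positivity))
        have h2 : (1 - (n:ℝ) ^ (-(1+(0:ℝ)))) ≠ 0 := by
          have := (m_prime_inv hp).2
          rw [add_zero, Real.rpow_neg_one, ← one_div]
          linarith
        have h3 : ContinuousAt (fun s : ℝ => Real.log (1 - (n:ℝ) ^ (-(1+s)))) 0 :=
          (continuousAt_const.sub h1).log h2
        have h4 : ContinuousAt (fun s : ℝ => -Real.log (1 - 1 / (n:ℝ)) * Real.exp (-(s * Real.log n))) 0 := by
          fun_prop
        exact h3.neg.sub h4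
      have := hc.tendsto.mono_left (nhdsWithin_le_nhds (s := Set.Ioi 0))
      convert this using 2
      rw [add_zero, Real.rpow_neg_one, ← one_div]
      simp
    · simp
  · filter_upwards [self_mem_nhdsWithin] with s hs n
    exact m_diff_bound hs n

lemma m_one_sub_exp : Tendsto (fun s : ℝ => Real.log (1 - Real.exp (-s)) - Real.log s)
    (nhdsWithin 0 (Set.Ioi 0)) (nhds 0) := by
  have hd : HasDerivAt (fun s : ℝ => 1 - Real.exp (-s)) 1 0 := by
    have := ((hasDerivAt_id (0:ℝ)).neg.exp).const_sub 1
    simpa using this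
  have h1 := hd.tendsto_slope.mono_left (nhdsWithin_mono 0 (fun x (hx : 0 < x) => hx.ne'))
  have h2 := (Real.continuousAt_log one_ne_zero).tendsto.comp h1
  rw [Real.log_one] at h2
  refine h2.congr' ?_
  filter_upwards [self_mem_nhdsWithin] with s hs
  have hs : 0 < s := hs
  have : Real.exp (-s) < 1 := Real.exp_lt_one_iff.mpr (by linarith)
  rw [← Real.log_div (by linarith) hs.ne', Function.comp_apply, slope_def_field]
  simp

lemma m_log_zeta : Tendsto (fun s : ℝ => Real.log s + ∑' n, mE s n)
    (nhdsWithin 0 (Set.Ioi 0)) (nhds 0) := by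
  have ht : Tendsto (fun s : ℝ => 1 + s) (nhdsWithin 0 (Set.Ioi 0)) (nhdsWithin 1 (Set.Ioi 1)) := by
    apply tendsto_nhdsWithin_of_tendsto_nhds_of_eventually_within
    · have : ContinuousAt (fun s : ℝ => 1 + s) 0 := by fun_prop
      have := this.tendsto.mono_left (nhdsWithin_le_nhds (s := Set.Ioi 0))
      simpa using this
    · filter_upwards [self_mem_nhdsWithin] with s hs
      have hs : 0 < s := hs
      simpa using hs
  have h1 := tendsto_sub_mul_tsum_nat_rpow.comp ht
  have h2 := (Real.continuousAt_log one_ne_zero).tendsto.comp h1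
  rw [Real.log_one] at h2
  refine h2.congr' ?_
  filter_upwards [self_mem_nhdsWithin] with s hs
  have hs : 0 < s := hs
  have hpos : 0 < ∑' n : ℕ, 1 / (n:ℝ) ^ (1+s) := by
    have hs' : Summable (fun n : ℕ => 1 / (n:ℝ) ^ (1+s)) :=
      Real.summable_one_div_nat_rpow.mpr (by linarith)
    exact hs'.tsum_pos (fun n => by positivity) 1 (by simp)
  rw [m_euler hs, ← Real.log_mul hs.ne' hpos.ne']
  simp

lemma m_H_hasSum {s : ℝ} (hs : 0 < s) :
    HasSum (fun n : ℕ => (1:ℝ) / n * Real.exp (-(s * n))) (-Real.log (1 - Real.exp (-s))) := by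
  have h := Real.hasSum_pow_div_log_of_abs_lt_one (x := Real.exp (-s))
    (by rw [abs_of_pos (Real.exp_pos _)]; exact Real.exp_lt_one_iff.mpr (by linarith))
  rw [← hasSum_nat_add_iff' 1]
  simp only [Finset.sum_range_one, Nat.cast_zero, div_zero, zero_mul, sub_zero]
  refine h.congr_fun ?_
  intro n
  rw [← Real.exp_nat_mul]
  push_cast
  ring_nf

lemma m_limit_zero (L : ℝ) (h : Tendsto (fun t => mGt t - mHt t) atTop (nhds L)) : L = 0 := by
  obtain ⟨h1, h2⟩ := m_abelian L h
  refine tendsto_nhds_unique h2 ?_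
  have h3 := (m_log_zeta.add m_one_sub_exp).sub m_diff_tendsto
  simp only [add_zero, sub_zero] at h3
  refine h3.congr' ?_
  filter_upwards [self_mem_nhdsWithin] with s hs
  have hs : 0 < s := hs
  rw [h1 s hs, m_laplace mG (fun n => Real.log n) mGt m_G_nonneg
    (fun n => Real.log_natCast_nonneg n) m_Gt_tsum hs (m_summable_Gs hs),
    m_laplace (fun n => (1:ℝ)/n) (fun n => (n:ℝ)) mHt (fun n => by positivity)
    (fun n => by positivity) m_Ht_tsum hs (m_H_hasSum hs).summable, (m_H_hasSum hs).tsum_eq,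
    (m_summable_E hs).tsum_sub (m_summable_Gs hs)]
  ring

theorem stmt_16 (γ : ℝ)
    (hγ : Tendsto (fun N : ℕ => (∑ n ∈ Finset.Icc 1 N, (1 : ℝ) / n) - Real.log N)
      atTop (nhds γ)) :
    Tendsto
      (fun x : ℝ =>
        (∏ p ∈ (Finset.Icc 1 ⌊x⌋₊).filter Nat.Prime, (1 - 1 / (p : ℝ))) /
          (Real.exp (-γ) / Real.log x))
      atTop (nhds 1) := by
  obtain ⟨C, hC⟩ := m_second
  have hG : Tendsto (fun x : ℝ => ∑ n ∈ Finset.Icc 1 ⌊x⌋₊, mG n - Real.log (Real.log x))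
      atTop (nhds C) := by
    have := (hC.comp (tendsto_nat_floor_atTop (α := ℝ))).add m_floor_loglog
    rw [add_zero] at this
    refine this.congr fun x => ?_
    simp only [Function.comp_apply]; ring
  have hH : Tendsto (fun t : ℝ => mHt t - Real.log t) atTop (nhds γ) := by
    have := (hγ.comp (tendsto_nat_floor_atTop (α := ℝ))).add m_floor_log
    rw [add_zero] at this
    refine this.congr fun x => ?_
    simp only [Function.comp_apply, mHt]; ring
  have hD : Tendsto (fun t => mGt t - mHt t) atTop (nhds (C - γ)) := by
    refine ((hG.comp Real.tendsto_exp_atTop).sub hH).congr fun t => ?_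
    simp only [Function.comp_apply, mGt, Real.log_exp]; ring
  have hCγ : C = γ := sub_eq_zero.mp (m_limit_zero _ hD)
  rw [hCγ] at hG
  have hfin := (Real.continuous_exp.tendsto 0).comp (by simpa using hG.const_sub γ)
  rw [Real.exp_zero] at hfin
  refine hfin.congr' ?_
  filter_upwards [eventually_gt_atTop 1] with x hx
  have hlx : 0 < Real.log x := Real.log_pos hx
  have hprod : ∏ p ∈ (Finset.Icc 1 ⌊x⌋₊).filter Nat.Prime, (1 - 1 / (p : ℝ)) =
      Real.exp (-∑ n ∈ Finset.Icc 1 ⌊x⌋₊, mG n) := by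
    unfold mG
    rw [← Finset.sum_filter, ← Finset.sum_neg_distrib, Real.exp_sum]
    apply Finset.prod_congr rfl
    intro p hp
    have := m_prime_inv (Finset.mem_filter.mp hp).2
    rw [neg_neg, Real.exp_log (by linarith)]
  rw [hprod, Function.comp_apply, div_div_eq_mul_div, sub_sub_eq_add_sub, sub_eq_add_neg, Real.exp_add,
    Real.exp_add, Real.exp_log hlx, Real.exp_neg γ, div_inv_eq_mul]
  ring
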